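/- Let m > 2 and n > 2 be odd integers and let p, q ≥ 2 be relatively prime integers such that either both p and q are odd, or p is odd and q is even with n = 2k−1 for even k. Then for all lens spaces L^m_p and L^n_q (i.e., for every admissible choice of parameters), cat(L^m_p × L^n_q) ≤ m + n − 2. -/

import Mathlib

open scoped Topology

/-- The Lusternik–Schnirelmann category of a space (normalized so that contractible spaces
have category 0): the least `k` such that `X` admits an open cover by `k+1` sets, each of
which has nullhomotopic inclusion into `X` (i.e. is contractible in `X`). -/
noncomputable def lsCat (X : Type*) [TopologicalSpace X] : ℕ :=
  sInf {k : ℕ | ∃ U : Fin (k + 1) → Set X,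
    (∀ i, IsOpen (U i)) ∧ (⋃ i, U i) = Set.univ ∧
    ∀ i, ContinuousMap.Nullhomotopic
      (⟨Subtype.val, continuous_subtype_val⟩ : C(U i, X))}

/-- The orbit relation on the unit sphere of `ℂ^k` defining the lens space
`L^{2k-1}_p(ℓ₁,…,ℓ_k)`: a fixed generator of `ℤ/p` acts coordinatewise by
`z_j ↦ exp(2πiℓ_j/p) z_j`, and `m` ranges over the powers of this generator. -/
def lensRel (p k : ℕ) (ℓ : Fin k → ℤ) :
    Metric.sphere (0 : EuclideanSpace ℂ (Fin k)) 1 →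
      Metric.sphere (0 : EuclideanSpace ℂ (Fin k)) 1 → Prop :=
  fun x y => ∃ m : ℤ, ∀ j : Fin k,
    (y.1 j) = Complex.exp (2 * Real.pi * Complex.I * m * ℓ j / p) * (x.1 j)

/-- The lens space `L^{2k-1}_p(ℓ₁,…,ℓ_k)`: the orbit space of the free linear action of `ℤ/p`
on the unit sphere `S^{2k-1} ⊆ ℂ^k` determined by the parameters `ℓ`, with the quotient
topology. -/
noncomputable def LensSpace (p k : ℕ) (ℓ : Fin k → ℤ) : Type :=
  Quot (lensRel p k ℓ)

noncomputable instance (p k : ℕ) (ℓ : Fin k → ℤ) : TopologicalSpace (LensSpace p k ℓ) :=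
  inferInstanceAs (TopologicalSpace (Quot (lensRel p k ℓ)))

/-!
The product of lens spaces is the quotient of a product `Y` of two spheres by a free action of the
cyclic group of order `N = pq`. Suppose finitely many functions on `Y`, all multiplied by the same
primitive `N`-th root of unity under the generator, have nonvanishing loci contractible in `Y`.
The points at which one of them strictly dominates the others and has argument less than `π / N`
in absolute value form an open set, contractible in `Y`, which the projection maps injectively onto
a set contractible in the quotient. Up to the action, this set contains every point where exactly
one function survives and its `N`-th power is not a nonpositive real; using also the multiples by
an `N`-th root of `-1`, two such sets catch all points where exactly one function survives.

Multiply the `a` coordinates of one sphere, raised to suitable powers, with the `b` coordinates of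
the other. In the layer `i + j = k`, where `k` is the sum of the least indices of nonvanishing
coordinates, exactly one product survives, and two sets per layer would give
`2 (a + b - 1)` sets. Now correct the two coordinates of index `0` by powers of the last ones. On
the last layer the corrected coordinates vanish, so the original ones are determined by the last
coordinates up to roots of unity, and they can be combined into a function whose `N`-th power is
positive there. One set then suffices for the last layer, which leaves `2 (a + b - 2) + 1` sets.
-/

open ContinuousMap
open scoped unitInterval

section Contractibility

variable {X Y Z : Type*} [TopologicalSpace X] [TopologicalSpace Y] [TopologicalSpace Z]

theorem nullhomotopic_iff_homotopic_const [PathConnectedSpace Y] {f : C(X, Y)} (c : Y) :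
    f.Nullhomotopic ↔ f.Homotopic (.const X c) := by
  refine ⟨fun ⟨d, hd⟩ => hd.trans ?_, fun h => ⟨c, h⟩⟩
  exact ⟨(PathConnectedSpace.somePath d c).toHomotopyConst⟩

/-- A subset of `X` is contractible in `X` if its inclusion into `X` is nullhomotopic; these are
the pieces of the covers that define `lsCat X`. -/
def IsContractibleIn (U : Set X) : Prop :=
  Nullhomotopic (⟨Subtype.val, continuous_subtype_val⟩ : C(U, X))

theorem lsCat_le_of_cover {ι : Type*} [Fintype ι] {k : ℕ} (hk : Fintype.card ι = k + 1)
    {U : ι → Set X} (hopen : ∀ i, IsOpen (U i)) (hcover : ⋃ i, U i = Set.univ)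
    (hcontr : ∀ i, IsContractibleIn (U i)) : lsCat X ≤ k := by
  let e := (Fintype.equivFinOfCardEq hk).symm
  exact Nat.sInf_le ⟨U ∘ e, fun i => hopen _, (e.surjective.iUnion_comp U).trans hcover,
    fun i => hcontr _⟩

namespace IsContractibleIn

theorem mono {U V : Set X} (hV : IsContractibleIn V) (hUV : U ⊆ V) : IsContractibleIn U :=
  hV.comp_left ⟨Set.inclusion hUV, continuous_inclusion hUV⟩

theorem of_prod {U : Set (Y × Z)} (hY : (ContinuousMap.fst.restrict U).Nullhomotopic)
    (hZ : (ContinuousMap.snd.restrict U).Nullhomotopic) : IsContractibleIn U := by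
  obtain ⟨y, hy⟩ := hY
  obtain ⟨z, hz⟩ := hZ
  exact ⟨(y, z), hy.prodMk hz⟩

theorem iUnion [PathConnectedSpace X] {ι : Type*} {V : ι → Set X} (hV : ∀ i, IsOpen (V i))
    (hdisj : Pairwise fun i j => Disjoint (V i) (V j)) (hcontr : ∀ i, IsContractibleIn (V i)) :
    IsContractibleIn (⋃ i, V i) := by
  obtain ⟨c⟩ := PathConnectedSpace.nonempty (X := X)
  have H i := ((nullhomotopic_iff_homotopic_const c).1 (hcontr i)).some
  let W (i : ι) : Set (I × (⋃ i, V i : Set X)) := {z | z.2.1 ∈ V i}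
  let φ (i : ι) : C(W i, X) := ⟨fun z => H i (z.1.1, ⟨z.1.2.1, z.2⟩), by fun_prop⟩
  have hφ (i j : ι) (z) (hi : z ∈ W i) (hj : z ∈ W j) : φ i ⟨z, hi⟩ = φ j ⟨z, hj⟩ := by
    obtain rfl : i = j := hdisj.eq (Set.not_disjoint_iff.2 ⟨z.2.1, hi, hj⟩)
    rfl
  have hW (z) : ∃ i, W i ∈ 𝓝 z := by
    obtain ⟨i, hi⟩ := Set.mem_iUnion.1 z.2.2
    exact ⟨i, ((hV i).preimage (by fun_prop)).mem_nhds hi⟩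
  have hlift (t : I) (x : (⋃ i, V i : Set X)) (i : ι) (hi : x.1 ∈ V i) :
      liftCover W φ hφ hW (t, x) = H i (t, ⟨x.1, hi⟩) :=
    liftCover_coe (S := W) (φ := φ) (hφ := hφ) (hS := hW) (⟨(t, x), hi⟩ : W i)
  refine ⟨c, ⟨liftCover W φ hφ hW, fun x => ?_, fun x => ?_⟩⟩
  all_goals
    obtain ⟨i, hi⟩ := Set.mem_iUnion.1 x.2
    simp [hlift _ x i hi]

theorem image {π : C(Y, X)} (hπ : IsOpenMap π) {V : Set Y} (hV : IsOpen V) (hinj : Set.InjOn π V)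
    (hcontr : IsContractibleIn V) : IsContractibleIn (π '' V) := by
  have hemb : Topology.IsOpenEmbedding (V.domRestrict π) :=
    .of_continuous_injective_isOpenMap (by fun_prop) (Set.injOn_iff_injective.1 hinj)
      (hπ.domRestrict hV)
  let e := hemb.toIsEmbedding.toHomeomorph
  have hrange : IsContractibleIn (Set.range (V.domRestrict π)) := by
    refine cast (congrArg Nullhomotopic ?_)
      ((hcontr.comp_right π).comp_left (⟨e.symm, e.symm.continuous⟩ : C(_, V)))
    ext x
    obtain ⟨y, rfl⟩ := e.surjective x
    simp [e]
  rwa [Set.range_domRestrict] at hrange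

end IsContractibleIn

end Contractibility

section Spheres

variable {V E : Type*} [TopologicalSpace V] [NormedAddCommGroup E] [NormedSpace ℝ E]

theorem homotopic_of_zero_notMem_segment {f g : C(V, ({0}ᶜ : Set E))}
    (h : ∀ v, (0 : E) ∉ segment ℝ (f v : E) (g v)) : f.Homotopic g := by
  let F : I × V → E := fun z => AffineMap.lineMap (f z.2 : E) (g z.2 : E) (z.1 : ℝ)
  have hF (z) : F z ≠ 0 := fun h0 =>
    h z.2 (by rw [segment_eq_image_lineMap]; exact ⟨z.1, z.1.2, h0⟩)
  exact ⟨⟨⟨fun z => ⟨F z, hF z⟩, by dsimp only [F]; fun_prop⟩, fun v => by simp [F],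
    fun v => by simp [F]⟩⟩

/-- The inclusion of the unit sphere into the punctured space. -/
def sphereInclusion (E : Type*) [NormedAddCommGroup E] [NormedSpace ℝ E] :
    C(Metric.sphere (0 : E) 1, ({0}ᶜ : Set E)) :=
  ⟨fun x => ⟨x, ne_zero_of_mem_unit_sphere x⟩, by fun_prop⟩

theorem nullhomotopic_of_sphereInclusion_comp {f : C(V, Metric.sphere (0 : E) 1)}
    (h : ((sphereInclusion E).comp f).Nullhomotopic) : f.Nullhomotopic := by
  let radial : C(({0}ᶜ : Set E), Metric.sphere (0 : E) 1) :=
    ContinuousMap.fst.comp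
      ⟨homeomorphUnitSphereProd E, (homeomorphUnitSphereProd E).continuous⟩
  refine cast (congrArg Nullhomotopic ?_) (h.comp_right radial)
  ext v
  simp [radial, sphereInclusion, homeomorphUnitSphereProd_apply_fst_coe]

/-- The unit sphere of `ℂ^ι`. -/
abbrev ComplexSphere (ι : Type*) [Fintype ι] : Type _ :=
  Metric.sphere (0 : EuclideanSpace ℂ ι) 1

namespace ComplexSphere

variable {ι : Type*} [Fintype ι]

theorem exists_apply_ne_zero (x : ComplexSphere ι) : ∃ i, x.1 i ≠ 0 := by
  by_contra! h
  exact ne_zero_of_mem_unit_sphere x (PiLp.ext h)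

instance [Nontrivial ι] : PathConnectedSpace (ComplexSphere ι) := by
  refine isPathConnected_iff_pathConnectedSpace.1 (isPathConnected_sphere ?_ _ zero_le_one)
  rw [← Module.finrank_eq_rank, ← Module.finrank_mul_finrank ℝ ℂ, Complex.finrank_real_complex,
    finrank_euclideanSpace]
  have := Fintype.one_lt_card (α := ι)
  exact_mod_cast (by omega : 1 < 2 * Fintype.card ι)

-- Shear the `i`-th coordinate by `g`, then contract to the `i'`-th basis vector.
theorem nullhomotopic_of_apply_ne (f : C(V, ComplexSphere ι)) (g : C(V, ℂ)) {i i' : ι}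
    (hii' : i ≠ i') (hne : ∀ v, (f v).1 i ≠ g v) (hzero : ∀ v, (f v).1 i' = 0 → g v = 0) :
    f.Nullhomotopic := by
  classical
  have hshear (v : V) (t : ℝ) : (f v).1 - t • g v • EuclideanSpace.single i 1 ≠ 0 := by
    intro h
    have hi' : (f v).1 i' = 0 := by simpa [hii'.symm] using congrArg (· i') h
    exact ne_zero_of_mem_unit_sphere (f v) (by simpa [hzero v hi'] using h)
  let sheared : C(V, ({0}ᶜ : Set (EuclideanSpace ℂ ι))) :=
    ⟨fun v => ⟨(f v).1 - g v • EuclideanSpace.single i 1, by simpa using hshear v 1⟩,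
      by fun_prop⟩
  let pole : ({0}ᶜ : Set (EuclideanSpace ℂ ι)) := ⟨EuclideanSpace.single i' 1, by simp⟩
  have hf_sheared : ((sphereInclusion _).comp f).Homotopic sheared := by
    refine homotopic_of_zero_notMem_segment fun v hv => ?_
    rw [segment_eq_image'] at hv
    obtain ⟨t, -, ht⟩ := hv
    exact hshear v t (by simpa [sphereInclusion, sheared, sub_eq_add_neg] using ht)
  have hsheared_pole : sheared.Homotopic (.const V pole) := by
    refine homotopic_of_zero_notMem_segment fun v hv => ?_
    obtain ⟨s, t, -, -, hst, h⟩ := hv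
    have hs : s = 0 := by
      simpa [sheared, pole, hii', sub_eq_zero, hne v] using congrArg (· i) h
    have ht : t = 0 := by
      simpa [sheared, pole, hs] using congrArg (· i') h
    simp [hs, ht] at hst
  exact nullhomotopic_of_sphereInclusion_comp ⟨pole, hf_sheared.trans hsheared_pole⟩

theorem nullhomotopic_of_apply_ne_zero [Nontrivial ι] (f : C(V, ComplexSphere ι)) {i : ι}
    (hne : ∀ v, (f v).1 i ≠ 0) : f.Nullhomotopic :=
  have ⟨_, hi'⟩ := exists_ne i
  nullhomotopic_of_apply_ne f 0 hi'.symm hne fun _ _ => rfl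

end ComplexSphere

end Spheres

section Sector

/-- The open sector of half-angle `π / N` about the positive real axis, a fundamental domain for
multiplication by `N`-th roots of unity up to boundary; for `N = 1` it is the slit plane. -/
def sector (N : ℕ) : Set ℂ :=
  {c | c ∈ Complex.slitPlane ∧ |c.arg| < Real.pi / N}

theorem isOpen_sector (N : ℕ) : IsOpen (sector N) :=
  ContinuousOn.isOpen_inter_preimage (f := fun c : ℂ => |c.arg|)
    (fun _ hc => (Complex.continuousAt_arg hc).abs.continuousWithinAt)
    Complex.isOpen_slitPlane isOpen_Iio

theorem ne_zero_of_mem_sector {N : ℕ} {c : ℂ} (hc : c ∈ sector N) : c ≠ 0 :=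
  Complex.slitPlane_ne_zero hc.1

variable {N : ℕ} [NeZero N]

theorem eq_one_of_mul_mem_sector {c η : ℂ} (hη : η ^ N = 1) (hc : c ∈ sector N)
    (hηc : η * c ∈ sector N) : η = 1 := by
  have root_unique {z : ℂ} (hz : z ∈ sector N) : (z ^ N) ^ (N⁻¹ : ℂ) = z :=
    Complex.pow_cpow_nat_inv (NeZero.ne N) (abs_lt.1 hz.2).1 (abs_lt.1 hz.2).2.le
  have h : η * c = c := by
    rw [← root_unique hηc, mul_pow, hη, one_mul, root_unique hc]
  exact (mul_eq_right₀ (ne_zero_of_mem_sector hc)).1 h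

theorem cpow_inv_mem_sector {z : ℂ} (hz : z ∈ Complex.slitPlane) :
    z ^ (N⁻¹ : ℂ) ∈ sector N := by
  have hN : (1 : ℝ) ≤ N := by exact_mod_cast NeZero.one_le (n := N)
  have him : (Complex.log z * (N⁻¹ : ℂ)).im = z.arg / N := by
    rw [← div_eq_mul_inv, Complex.div_natCast_im, Complex.log_im]
  have harg_lt : |z.arg / N| < Real.pi / N := by
    rw [abs_div, Nat.abs_cast]
    refine div_lt_div_of_pos_right (abs_lt.2 ⟨Complex.neg_pi_lt_arg z, ?_⟩) (by linarith)
    exact (Complex.arg_le_pi z).lt_of_ne (Complex.mem_slitPlane_iff_arg.1 hz).1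
  have hpi : |z.arg / N| < Real.pi := harg_lt.trans_le (div_le_self Real.pi_pos.le hN)
  have harg : (z ^ (N⁻¹ : ℂ)).arg = z.arg / N := by
    rw [Complex.cpow_def_of_ne_zero (Complex.slitPlane_ne_zero hz), ← Complex.log_im,
      Complex.log_exp, him] <;> rw [him]
    exacts [(abs_lt.1 hpi).1, (abs_lt.1 hpi).2.le]
  rw [← harg] at harg_lt hpi
  refine ⟨Complex.mem_slitPlane_iff_arg.2 ⟨(abs_lt.1 hpi).2.ne, ?_⟩, harg_lt⟩
  exact (Complex.cpow_ne_zero_iff_of_exponent_ne_zero (by simp [NeZero.ne N])).2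
    (Complex.slitPlane_ne_zero hz)

theorem exists_mul_mem_sector {c : ℂ} (hc : c ^ N ∈ Complex.slitPlane) :
    ∃ η : ℂ, η ^ N = 1 ∧ η * c ∈ sector N := by
  have hc0 : c ≠ 0 := fun h => by simp [h, NeZero.ne N] at hc
  refine ⟨(c ^ N) ^ (N⁻¹ : ℂ) / c, ?_, ?_⟩
  · rw [div_pow, Complex.cpow_nat_inv_pow _ (NeZero.ne N), div_self (pow_ne_zero N hc0)]
  · rw [div_mul_cancel₀ _ hc0]
    exact cpow_inv_mem_sector hc

end Sector

section CyclicQuotients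

variable {X X' Y Y' : Type*} [TopologicalSpace X] [TopologicalSpace X'] [TopologicalSpace Y]
  [TopologicalSpace Y']

/-- `π : Y → X` is the orbit projection of the action of `ℤ/N` on `Y` generated by `T`. Orbits are
described by natural iterates of `T`, which suffices because `T` has finite order. -/
structure IsCyclicQuotient (T : C(Y, Y)) (N : ℕ) (π : C(Y, X)) : Prop where
  isOpenQuotientMap : IsOpenQuotientMap π
  iterate_eq_id : T^[N] = id
  map_eq_iff : ∀ y y', π y = π y' ↔ ∃ n, T^[n] y = y'

/-- `f` transforms under `T` by the scalar `ω`, and its nonvanishing locus is contractible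
in `Y`. -/
structure IsCategoricalFunction (T : C(Y, Y)) (ω : ℂ) (f : C(Y, ℂ)) : Prop where
  semiconj : Function.Semiconj f T (ω * ·)
  isContractibleIn : IsContractibleIn {y | f y ≠ 0}

theorem IsCategoricalFunction.const_smul {T : C(Y, Y)} {ω : ℂ} {f : C(Y, ℂ)}
    (hf : IsCategoricalFunction T ω f) {c : ℂ} (hc : c ≠ 0) :
    IsCategoricalFunction T ω (c • f) where
  semiconj y := by simp [hf.semiconj y, mul_left_comm]
  isContractibleIn := by simpa [hc] using hf.isContractibleIn

theorem IsCategoricalFunction.apply_iterate {T : C(Y, Y)} {ω : ℂ} {f : C(Y, ℂ)}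
    (hf : IsCategoricalFunction T ω f) (n : ℕ) (y : Y) : f (T^[n] y) = ω ^ n * f y := by
  simpa [mul_left_iterate] using hf.semiconj.iterate_right n y

section DominantSet

variable {ι : Type*} (N : ℕ) (f : ι → C(Y, ℂ))

/-- The set where `f i` lies in the sector of half-angle `π / N` and strictly dominates all other
members of the family. -/
def dominantPiece (i : ι) : Set Y :=
  {y | f i y ∈ sector N ∧ ∀ j ≠ i, ‖f j y‖ < ‖f i y‖}

/-- The set where some member of the family lies in the sector of half-angle `π / N` and strictly
dominates all others. -/
def dominantSet : Set Y :=
  ⋃ i, dominantPiece N f i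

theorem isOpen_dominantPiece [Finite ι] (i : ι) : IsOpen (dominantPiece N f i) := by
  have heq : dominantPiece N f i =
      f i ⁻¹' sector N ∩ ⋂ j, ⋂ _ : j ≠ i, {y | ‖f j y‖ < ‖f i y‖} := by
    ext y
    simp [dominantPiece]
  rw [heq]
  exact ((isOpen_sector N).preimage (f i).continuous).inter <|
    isOpen_iInter_of_finite fun j => isOpen_iInter_of_finite fun _ =>
      isOpen_lt (by fun_prop) (by fun_prop)

theorem disjoint_dominantPiece {i j : ι} (hij : i ≠ j) :
    Disjoint (dominantPiece N f i) (dominantPiece N f j) :=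
  Set.disjoint_left.2 fun _ hi hj => (hi.2 j hij.symm).asymm (hj.2 i hij)

theorem isOpen_dominantSet [Finite ι] : IsOpen (dominantSet N f) :=
  isOpen_iUnion (isOpen_dominantPiece N f)

variable {N f}

theorem isContractibleIn_dominantSet [PathConnectedSpace Y] [Finite ι]
    (hf : ∀ i, IsContractibleIn {y | f i y ≠ 0}) : IsContractibleIn (dominantSet N f) :=
  .iUnion (isOpen_dominantPiece N f) (fun _ _ => disjoint_dominantPiece N f) fun i =>
    (hf i).mono fun _ hy => ne_zero_of_mem_sector hy.1

end DominantSet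

namespace IsCyclicQuotient

variable {T : C(Y, Y)} {T' : C(Y', Y')} {N p q : ℕ} {π : C(Y, X)} {π' : C(Y', X')}

theorem of_quot [NeZero N] {r : Y → Y → Prop} (hT : T^[N] = id)
    (hr : ∀ y y', r y y' ↔ ∃ n, T^[n] y = y') :
    IsCyclicQuotient T N (⟨Quot.mk r, continuous_quot_mk⟩ : C(Y, Quot r)) := by
  have hequiv : Equivalence r := by
    refine ⟨fun y => (hr y y).2 ⟨0, rfl⟩, fun {y y'} h => ?_, fun {x y z} hxy hyz => ?_⟩
    · obtain ⟨n, rfl⟩ := (hr y y').1 h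
      refine (hr _ _).2 ⟨(N - 1) * n, ?_⟩
      have hN : (N - 1) * n + n = N * n := by
        rw [← Nat.succ_mul, Nat.succ_eq_add_one, Nat.sub_add_cancel NeZero.one_le]
      rw [← Function.iterate_add_apply, hN, Function.iterate_mul, hT, Function.iterate_id, id]
    · obtain ⟨m, rfl⟩ := (hr x y).1 hxy
      obtain ⟨n, rfl⟩ := (hr _ z).1 hyz
      exact (hr _ _).2 ⟨n + m, Function.iterate_add_apply T n m x⟩
  have map_eq_iff (y y') : Quot.mk r y = Quot.mk r y' ↔ ∃ n, T^[n] y = y' := by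
    rw [hequiv.quot_mk_eq_iff, hr]
  refine ⟨⟨Quot.mk_surjective, continuous_quot_mk, fun O hO => ?_⟩, hT, map_eq_iff⟩
  have hpreimage : Quot.mk r ⁻¹' (Quot.mk r '' O) = ⋃ n, T^[n] ⁻¹' O := by
    ext y
    simp only [Set.mem_preimage, Set.mem_image, Set.mem_iUnion]
    constructor
    · rintro ⟨y', hy', h⟩
      obtain ⟨n, rfl⟩ := (map_eq_iff y y').1 h.symm
      exact ⟨n, hy'⟩
    · rintro ⟨n, hn⟩
      exact ⟨_, hn, ((map_eq_iff _ _).2 ⟨n, rfl⟩).symm⟩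
  rw [coe_mk, ← isQuotientMap_quot_mk.isOpen_preimage, hpreimage]
  exact isOpen_iUnion fun n => hO.preimage (T.continuous.iterate n)

theorem iterate_mod (h : IsCyclicQuotient T N π) (n : ℕ) (y : Y) : T^[n % N] y = T^[n] y :=
  Function.IsPeriodicPt.iterate_mod_apply (congrFun h.iterate_eq_id y) n

-- By the Chinese remainder theorem `T × T'` generates `ℤ/p × ℤ/q`.
theorem prodMap (h : IsCyclicQuotient T p π) (h' : IsCyclicQuotient T' q π')
    (hpq : p.Coprime q) : IsCyclicQuotient (T.prodMap T') (p * q) (π.prodMap π') where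
  isOpenQuotientMap := h.isOpenQuotientMap.prodMap h'.isOpenQuotientMap
  iterate_eq_id := by
    change (Prod.map T T')^[p * q] = id
    rw [Prod.map_iterate, Function.iterate_mul, h.iterate_eq_id, mul_comm p,
      Function.iterate_mul, h'.iterate_eq_id, Function.iterate_id, Function.iterate_id,
      Prod.map_id]
  map_eq_iff := by
    rintro ⟨y, z⟩ ⟨y', z'⟩
    change Prod.map π π' (y, z) = Prod.map π π' (y', z') ↔
      ∃ n, (Prod.map T T')^[n] (y, z) = (y', z')
    simp only [Prod.map_iterate, Prod.map_apply, Prod.mk.injEq, h.map_eq_iff, h'.map_eq_iff]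
    refine ⟨?_, fun ⟨n, hy, hz⟩ => ⟨⟨n, hy⟩, ⟨n, hz⟩⟩⟩
    rintro ⟨⟨m, rfl⟩, ⟨n, rfl⟩⟩
    obtain ⟨l, hlm, hln⟩ := Nat.chineseRemainder hpq m n
    refine ⟨l, ?_, ?_⟩
    · rw [← h.iterate_mod l, hlm, h.iterate_mod]
    · rw [← h'.iterate_mod l, hln, h'.iterate_mod]

variable {ι : Type*} {ω : ℂ} {f : ι → C(Y, ℂ)}

theorem injOn_dominantSet [NeZero N] (h : IsCyclicQuotient T N π) (hω : IsPrimitiveRoot ω N)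
    (hf : ∀ i, IsCategoricalFunction T ω (f i)) : Set.InjOn π (dominantSet N f) := by
  intro y hy y' hy' hyy'
  obtain ⟨n, rfl⟩ := (h.map_eq_iff y y').1 hyy'
  obtain ⟨i, hi⟩ := Set.mem_iUnion.1 hy
  obtain ⟨j, hj⟩ := Set.mem_iUnion.1 hy'
  have hnorm (k : ι) : ‖f k (T^[n] y)‖ = ‖f k y‖ := by
    rw [(hf k).apply_iterate, norm_mul, norm_pow, hω.norm'_eq_one (NeZero.ne N), one_pow, one_mul]
  obtain rfl : i = j := by
    by_contra hij
    have hlt := hj.2 i hij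
    rw [hnorm, hnorm] at hlt
    exact hlt.asymm (hi.2 j (Ne.symm hij))
  have hωn : ω ^ n = 1 :=
    eq_one_of_mul_mem_sector (by rw [pow_right_comm, hω.pow_eq_one, one_pow]) hi.1
      ((hf i).apply_iterate n y ▸ hj.1)
  rw [← h.iterate_mod, Nat.mod_eq_zero_of_dvd (hω.dvd_of_pow_eq_one n hωn), Function.iterate_zero,
    id]

theorem mem_image_dominantSet [NeZero N] (h : IsCyclicQuotient T N π) (hω : IsPrimitiveRoot ω N)
    (hf : ∀ i, IsCategoricalFunction T ω (f i)) {y : Y} {i : ι}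
    (hi : f i y ^ N ∈ Complex.slitPlane) (hj : ∀ j ≠ i, f j y = 0) :
    π y ∈ π '' dominantSet N f := by
  obtain ⟨η, hη, hsector⟩ := exists_mul_mem_sector hi
  obtain ⟨n, -, rfl⟩ := hω.eq_pow_of_pow_eq_one hη
  rw [← (hf i).apply_iterate] at hsector
  refine ⟨T^[n] y, Set.mem_iUnion.2 ⟨i, hsector, fun j hji => ?_⟩,
    ((h.map_eq_iff _ _).2 ⟨n, rfl⟩).symm⟩
  rw [(hf j).apply_iterate, hj j hji, mul_zero, norm_zero]
  exact norm_pos_iff.2 (ne_zero_of_mem_sector hsector)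

theorem lsCat_le_of_pow_mem_slitPlane [NeZero N] [PathConnectedSpace Y]
    (h : IsCyclicQuotient T N π) (hω : IsPrimitiveRoot ω N) {κ : Type*} [Fintype κ] {m : ℕ}
    (hκ : Fintype.card κ = m + 1) {ι : κ → Type*} [∀ k, Finite (ι k)] (f : ∀ k, ι k → C(Y, ℂ))
    (hf : ∀ k i, IsCategoricalFunction T ω (f k i))
    (hcover : ∀ y, ∃ k i, f k i y ^ N ∈ Complex.slitPlane ∧ ∀ j ≠ i, f k j y = 0) :
    lsCat X ≤ m := by
  have hopen := h.isOpenQuotientMap.isOpenMap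
  refine lsCat_le_of_cover hκ (U := fun k => π '' dominantSet N (f k))
    (fun k => hopen _ (isOpen_dominantSet N (f k))) (Set.iUnion_eq_univ_iff.2 fun x => ?_)
    fun k => ?_
  · obtain ⟨y, rfl⟩ := h.isOpenQuotientMap.surjective x
    obtain ⟨k, i, hi, hj⟩ := hcover y
    exact ⟨k, h.mem_image_dominantSet hω (hf k) hi hj⟩
  · exact (isContractibleIn_dominantSet fun i => (hf k i).isContractibleIn).image hopen
      (isOpen_dominantSet N (f k)) (h.injOn_dominantSet hω (hf k))

-- A family is used twice, once as it is and once multiplied by an `N`-th root of `-1`, because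
-- one of `c` and `-c` lies in the slit plane whenever `c ≠ 0`.
theorem lsCat_le_two_mul [NeZero N] [PathConnectedSpace Y] (h : IsCyclicQuotient T N π)
    (hω : IsPrimitiveRoot ω N) {K : ℕ} {ι : Fin K → Type*} [∀ k, Finite (ι k)]
    {f : ∀ k, ι k → C(Y, ℂ)} (hf : ∀ k i, IsCategoricalFunction T ω (f k i))
    {u : C(Y, ℂ)} (hu : IsCategoricalFunction T ω u)
    (hcover : ∀ y, (∃ k i, f k i y ≠ 0 ∧ ∀ j ≠ i, f k j y = 0) ∨ u y ^ N ∈ Complex.slitPlane) :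
    lsCat X ≤ 2 * K := by
  obtain ⟨ζ, hζ⟩ := IsAlgClosed.exists_pow_nat_eq (-1 : ℂ) (NeZero.pos N)
  have hζ0 : ζ ≠ 0 := fun h0 => by simp [h0, NeZero.ne N] at hζ
  let J : Option (Fin K × Bool) → Type _ := fun o => o.elim PUnit fun k => ι k.1
  have hfinite : ∀ o, Finite (J o) := by
    rintro (_ | k) <;> dsimp only [J, Option.elim] <;> infer_instance
  let F : ∀ o, J o → C(Y, ℂ)
    | none => fun _ => u
    | some (k, true) => fun i => ζ • f k i
    | some (k, false) => f k
  have hF : ∀ o i, IsCategoricalFunction T ω (F o i)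
    | none => fun _ => hu
    | some (k, true) => fun i => (hf k i).const_smul hζ0
    | some (k, false) => hf k
  refine h.lsCat_le_of_pow_mem_slitPlane hω (by simp [mul_comm]) F hF fun y => ?_
  obtain ⟨k, i, hi, hj⟩ | hy := hcover y
  · obtain hpos | hneg := Complex.mem_slitPlane_or_neg_mem_slitPlane (pow_ne_zero N hi)
    · exact ⟨some (k, false), i, hpos, hj⟩
    · refine ⟨some (k, true), i, ?_, fun j hji => ?_⟩
      · simpa [F, mul_pow, hζ] using hneg
      · simp [F, hj j hji]
  · exact ⟨none, PUnit.unit, hy, fun _ hj => (hj rfl).elim⟩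

end IsCyclicQuotient

end CyclicQuotients

section LensSpaces

namespace ComplexSphere

variable {ι : Type*} [Fintype ι]

/-- The diagonal unitary map multiplying the `i`-th coordinate by `ω i`, restricted to the unit
sphere. -/
noncomputable def diagRotation (ω : ι → Circle) : C(ComplexSphere ι, ComplexSphere ι) where
  toFun x := ⟨WithLp.toLp 2 fun i => (ω i : ℂ) * x.1 i, by
    refine mem_sphere_zero_iff_norm.2 (Eq.trans ?_ (norm_eq_of_mem_sphere x))
    simp only [EuclideanSpace.norm_eq, norm_mul, Circle.norm_coe, one_mul]⟩
  continuous_toFun := by fun_prop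

@[simp]
theorem diagRotation_apply (ω : ι → Circle) (x : ComplexSphere ι) (i : ι) :
    (diagRotation ω x).1 i = ω i * x.1 i :=
  rfl

theorem iterate_diagRotation_apply (ω : ι → Circle) (n : ℕ) (x : ComplexSphere ι) (i : ι) :
    ((diagRotation ω)^[n] x).1 i = (ω i : ℂ) ^ n * x.1 i := by
  have h : Function.Semiconj (fun x : ComplexSphere ι => x.1 i) (diagRotation ω) ((ω i : ℂ) * ·) :=
    fun _ => rfl
  simpa [mul_left_iterate] using h.iterate_right n x

end ComplexSphere

open ComplexSphere

/-- The root of unity `exp (2πil/p)`, by which a generator of `ℤ/p` acts on a coordinate of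
weight `l`. -/
noncomputable def lensRoot (p : ℕ) (l : ℤ) : Circle :=
  Circle.exp (2 * Real.pi * l / p)

theorem coe_lensRoot (p : ℕ) (l : ℤ) :
    (lensRoot p l : ℂ) = Complex.exp (2 * Real.pi * Complex.I * (l / p)) := by
  rw [lensRoot, Circle.coe_exp]
  push_cast
  ring_nf

theorem isPrimitiveRoot_lensRoot {p : ℕ} [NeZero p] {l : ℤ} (hl : IsCoprime l p) :
    IsPrimitiveRoot (lensRoot p l : ℂ) p := by
  rw [coe_lensRoot]
  exact Complex.isPrimitiveRoot_exp_of_isCoprime l p (NeZero.ne p) hl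

variable {p k : ℕ} {ℓ : Fin k → ℤ}

theorem lensRel_iff_zpow {x y : ComplexSphere (Fin k)} :
    lensRel p k ℓ x y ↔ ∃ m : ℤ, ∀ j, y.1 j = (lensRoot p (ℓ j) : ℂ) ^ m * x.1 j := by
  refine exists_congr fun m => forall_congr' fun j => ?_
  rw [coe_lensRoot, ← Complex.exp_int_mul]
  ring_nf

theorem iterate_diagRotation_lensRoot [NeZero p] (hℓ : ∀ j, IsCoprime (ℓ j) p) :
    (diagRotation fun j => lensRoot p (ℓ j))^[p] = id := by
  ext x j
  rw [iterate_diagRotation_apply, (isPrimitiveRoot_lensRoot (hℓ j)).pow_eq_one, one_mul, id]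

theorem lensRel_iff_iterate [NeZero p] (hℓ : ∀ j, IsCoprime (ℓ j) p)
    {x y : ComplexSphere (Fin k)} :
    lensRel p k ℓ x y ↔ ∃ n, (diagRotation fun j => lensRoot p (ℓ j))^[n] x = y := by
  simp only [lensRel_iff_zpow, Subtype.ext_iff, PiLp.ext_iff, iterate_diagRotation_apply]
  refine ⟨fun ⟨m, hm⟩ => ⟨(m % p).toNat, fun j => ?_⟩, fun ⟨n, hn⟩ => ⟨n, fun j => ?_⟩⟩
  · have hp : lensRoot p (ℓ j) ^ (p : ℤ) = 1 :=
      Circle.ext (by simpa using (isPrimitiveRoot_lensRoot (hℓ j)).pow_eq_one)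
    rw [hm, ← Circle.coe_zpow, zpow_eq_zpow_emod m hp, Circle.coe_zpow, ← zpow_natCast,
      Int.toNat_of_nonneg (Int.emod_nonneg _ (by exact_mod_cast NeZero.ne p))]
  · rw [zpow_natCast, hn]

/-- The orbit projection from the sphere to the lens space. -/
def LensSpace.mk (p k : ℕ) (ℓ : Fin k → ℤ) : C(ComplexSphere (Fin k), LensSpace p k ℓ) :=
  ⟨Quot.mk (lensRel p k ℓ), continuous_quot_mk⟩

theorem LensSpace.isCyclicQuotient_mk [NeZero p] (hℓ : ∀ j, IsCoprime (ℓ j) p) :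
    IsCyclicQuotient (diagRotation fun j => lensRoot p (ℓ j)) p (LensSpace.mk p k ℓ) :=
  .of_quot (iterate_diagRotation_lensRoot hℓ) fun _ _ => lensRel_iff_iterate hℓ

end LensSpaces

section TwistedCoordinates

open ComplexSphere

variable {n : ℕ} {ω : Fin (n + 2) → Circle} {r : Fin (n + 2) → ℕ}

/-- Exponents for which all monomials `x_i ^ r_i` are multiplied by the same scalar `ω 0` under
`diagRotation ω`. -/
structure IsNormalizing (ω : Fin (n + 2) → Circle) (r : Fin (n + 2) → ℕ) : Prop where
  zero : r 0 = 1
  ne_zero : ∀ i, r i ≠ 0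
  pow_eq : ∀ i, (ω i : ℂ) ^ r i = ω 0

theorem exists_isNormalizing {p : ℕ} [NeZero p] (hω : ∀ i, IsPrimitiveRoot (ω i : ℂ) p) :
    ∃ r, IsNormalizing ω r := by
  have hpow (i) : ∃ e ≠ 0, (ω i : ℂ) ^ e = ω 0 := by
    obtain ⟨e, -, he⟩ := (hω i).eq_pow_of_pow_eq_one (hω 0).pow_eq_one
    exact ⟨e + p, by simp [NeZero.ne p], by rw [pow_add, (hω i).pow_eq_one, mul_one, he]⟩
  choose e he0 he using hpow
  refine ⟨Function.update e 0 1, by simp, fun i => ?_, fun i => ?_⟩ <;>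
    obtain rfl | hi := eq_or_ne i 0 <;> simp [*]

/-- The powers `x_i ^ (r_i q)`, except that the one with `i = 0` is corrected by the power of the
last coordinate twisted by `τ`. A parameter `τ` depending on a second space couples the
coordinates on a product. -/
def twistedCoord (r : Fin (n + 2) → ℕ) (q : ℕ) (τ : ℂ) (x : ComplexSphere (Fin (n + 2)))
    (i : Fin (n + 2)) : ℂ :=
  (x.1 i ^ r i) ^ q -
    (if i = 0 then x.1 (Fin.last _) ^ r (Fin.last _) * τ else 0) ^ q

theorem IsNormalizing.diagRotation_apply_pow (hr : IsNormalizing ω r)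
    (x : ComplexSphere (Fin (n + 2))) (i : Fin (n + 2)) :
    (diagRotation ω x).1 i ^ r i = ω 0 * x.1 i ^ r i := by
  rw [diagRotation_apply, mul_pow, hr.pow_eq]

theorem IsNormalizing.twistedCoord_diagRotation (hr : IsNormalizing ω r) {q : ℕ} {τ τ' : ℂ}
    (hτ : τ' ^ q = τ ^ q) (x : ComplexSphere (Fin (n + 2))) (i : Fin (n + 2)) :
    twistedCoord r q τ' (diagRotation ω x) i = (ω 0 : ℂ) ^ q * twistedCoord r q τ x i := by
  simp only [twistedCoord, hr.diagRotation_apply_pow]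
  split_ifs
  · simp only [mul_pow, hτ]
    ring
  · obtain rfl | hq := eq_or_ne q 0
    · simp
    · simp [mul_pow, hq]

theorem IsNormalizing.exists_twistedCoord_ne_zero (hr : IsNormalizing ω r) {q : ℕ} [NeZero q]
    (τ : ℂ) (x : ComplexSphere (Fin (n + 2))) : ∃ i, twistedCoord r q τ x i ≠ 0 := by
  obtain hlast | hlast := eq_or_ne (x.1 (Fin.last _)) 0
  · obtain ⟨i, hi⟩ := x.exists_apply_ne_zero
    exact ⟨i, by simp [twistedCoord, hlast, hr.ne_zero, NeZero.ne q, hi]⟩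
  · exact ⟨Fin.last _, by simp [twistedCoord, NeZero.ne q, hlast]⟩

theorem IsNormalizing.apply_zero_pow_eq (hr : IsNormalizing ω r) {q : ℕ} {τ : ℂ}
    {x : ComplexSphere (Fin (n + 2))} (h : twistedCoord r q τ x 0 = 0) :
    x.1 0 ^ q = (x.1 (Fin.last _) ^ r (Fin.last _) * τ) ^ q := by
  simpa [twistedCoord, hr.zero, sub_eq_zero] using h

theorem IsNormalizing.nullhomotopic_of_twistedCoord_ne_zero (hr : IsNormalizing ω r) {q : ℕ}
    {V : Type*} [TopologicalSpace V] {f : C(V, ComplexSphere (Fin (n + 2)))} (τ : C(V, ℂ))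
    {i : Fin (n + 2)} (hne : ∀ v, twistedCoord r q (τ v) (f v) i ≠ 0) : f.Nullhomotopic := by
  have hpow (v) : (f v).1 i ^ r i ≠
      if i = 0 then (f v).1 (Fin.last _) ^ r (Fin.last _) * τ v else 0 :=
    fun h => hne v (by rw [twistedCoord, h, sub_self])
  obtain rfl | hi := eq_or_ne i 0
  · let g : C(V, ℂ) := ⟨fun v => (f v).1 (Fin.last _) ^ r (Fin.last _) * τ v, by fun_prop⟩
    refine nullhomotopic_of_apply_ne f g (Fin.last_pos.ne) (fun v => ?_) fun v hv => ?_
    · simpa [g, hr.zero] using hpow v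
    · simp [g, hv, hr.ne_zero]
  · exact nullhomotopic_of_apply_ne_zero f (i := i) fun v hv =>
      hpow v (by simp [hi, hv, hr.ne_zero])

end TwistedCoordinates

section ProductOfSpheres

open ComplexSphere
open scoped ComplexConjugate

variable {a b : ℕ} {ω : Fin (a + 2) → Circle} {ω' : Fin (b + 2) → Circle}
  {r : Fin (a + 2) → ℕ} {r' : Fin (b + 2) → ℕ} {p q : ℕ}

/-- The product of powers of the two last coordinates that serves as the coupling parameter of the
twisted coordinates on a product of spheres. -/
def coupling (r : Fin (a + 2) → ℕ) (r' : Fin (b + 2) → ℕ) (p q : ℕ) :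
    C(ComplexSphere (Fin (a + 2)) × ComplexSphere (Fin (b + 2)), ℂ) where
  toFun y := (y.1.1 (Fin.last _) ^ r (Fin.last _)) ^ q * (y.2.1 (Fin.last _) ^ r' (Fin.last _)) ^ p
  continuous_toFun := by fun_prop

/-- The product of a twisted coordinate on the first sphere and one on the second. The powers of
`coupling` are chosen so that the twists are invariant after raising to the `q`-th and `p`-th
powers. -/
noncomputable def biCoord (r : Fin (a + 2) → ℕ) (r' : Fin (b + 2) → ℕ) (p q : ℕ)
    (ij : Fin (a + 2) × Fin (b + 2)) :
    C(ComplexSphere (Fin (a + 2)) × ComplexSphere (Fin (b + 2)), ℂ) where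
  toFun y := twistedCoord r q (coupling r r' p q y ^ p) y.1 ij.1 *
    twistedCoord r' p (coupling r r' p q y ^ q) y.2 ij.2
  continuous_toFun := by
    unfold twistedCoord
    split_ifs <;> fun_prop

/-- The function covering the stratum where only the last twisted coordinates survive. Multiplying
`coupling` by invariant factors makes its `pq`-th power positive there when `p α = 1 + q β`. -/
noncomputable def terminalFunction (r : Fin (a + 2) → ℕ) (r' : Fin (b + 2) → ℕ) (p q α β : ℕ) :
    C(ComplexSphere (Fin (a + 2)) × ComplexSphere (Fin (b + 2)), ℂ) where
  toFun y := coupling r r' p q y *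
    conj (conj (y.1.1 (Fin.last _) ^ r (Fin.last _)) * y.1.1 0) ^ α *
    (conj (y.2.1 (Fin.last _) ^ r' (Fin.last _)) * y.2.1 0) ^ β
  continuous_toFun := by fun_prop

theorem coupling_diagRotation (hr : IsNormalizing ω r) (hr' : IsNormalizing ω' r')
    (x : ComplexSphere (Fin (a + 2))) (z : ComplexSphere (Fin (b + 2))) :
    coupling r r' p q (diagRotation ω x, diagRotation ω' z) =
      (ω 0 : ℂ) ^ q * (ω' 0 : ℂ) ^ p * coupling r r' p q (x, z) := by
  simp only [coupling, coe_mk, hr.diagRotation_apply_pow, hr'.diagRotation_apply_pow]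
  ring

theorem last_ne_zero_of_coupling_ne_zero [NeZero p] [NeZero q] (hr : IsNormalizing ω r)
    (hr' : IsNormalizing ω' r') {y : ComplexSphere (Fin (a + 2)) × ComplexSphere (Fin (b + 2))}
    (hy : coupling r r' p q y ≠ 0) : y.1.1 (Fin.last _) ≠ 0 ∧ y.2.1 (Fin.last _) ≠ 0 := by
  simpa [coupling, NeZero.ne p, NeZero.ne q, hr.ne_zero, hr'.ne_zero] using hy

theorem isCategoricalFunction_biCoord (hr : IsNormalizing ω r) (hr' : IsNormalizing ω' r')
    (hχ : ((ω 0 : ℂ) ^ q * (ω' 0 : ℂ) ^ p) ^ (p * q) = 1) (ij : Fin (a + 2) × Fin (b + 2)) :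
    IsCategoricalFunction ((diagRotation ω).prodMap (diagRotation ω'))
      ((ω 0 : ℂ) ^ q * (ω' 0 : ℂ) ^ p) (biCoord r r' p q ij) where
  semiconj := by
    rintro ⟨x, z⟩
    change biCoord r r' p q ij (diagRotation ω x, diagRotation ω' z) =
      _ * biCoord r r' p q ij (x, z)
    simp only [biCoord, coe_mk, coupling_diagRotation hr hr']
    rw [hr.twistedCoord_diagRotation (τ := coupling r r' p q (x, z) ^ p),
      hr'.twistedCoord_diagRotation (τ := coupling r r' p q (x, z) ^ q)]
    · ring
    · rw [← pow_mul, mul_pow, mul_comm q, hχ, one_mul, mul_comm p, pow_mul]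
    · rw [← pow_mul, mul_pow, hχ, one_mul, pow_mul]
  isContractibleIn := by
    let θ := (coupling r r' p q).restrict {y | biCoord r r' p q ij y ≠ 0}
    exact .of_prod
      (hr.nullhomotopic_of_twistedCoord_ne_zero (θ ^ p) fun y => left_ne_zero_of_mul y.2)
      (hr'.nullhomotopic_of_twistedCoord_ne_zero (θ ^ q) fun y => right_ne_zero_of_mul y.2)

theorem isCategoricalFunction_terminalFunction [NeZero p] [NeZero q] (hr : IsNormalizing ω r)
    (hr' : IsNormalizing ω' r') (α β : ℕ) :
    IsCategoricalFunction ((diagRotation ω).prodMap (diagRotation ω'))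
      ((ω 0 : ℂ) ^ q * (ω' 0 : ℂ) ^ p) (terminalFunction r r' p q α β) where
  semiconj := by
    rintro ⟨x, z⟩
    have hinvariant (c : Circle) (v w : ℂ) :
        conj (c * v) * (c * w) = conj v * w := by
      rw [map_mul, ← Circle.coe_inv_eq_conj, mul_mul_mul_comm, ← Circle.coe_mul, inv_mul_cancel,
        Circle.coe_one, one_mul]
    change terminalFunction r r' p q α β (diagRotation ω x, diagRotation ω' z) =
      _ * terminalFunction r r' p q α β (x, z)
    simp only [terminalFunction, coe_mk, coupling_diagRotation hr hr', hr.diagRotation_apply_pow,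
      hr'.diagRotation_apply_pow]
    simp only [diagRotation_apply, hinvariant, mul_assoc]
  isContractibleIn := by
    have hlast (y : {y | terminalFunction r r' p q α β y ≠ 0}) :=
      last_ne_zero_of_coupling_ne_zero hr hr' (left_ne_zero_of_mul (left_ne_zero_of_mul y.2))
    exact .of_prod (nullhomotopic_of_apply_ne_zero _ fun y => (hlast y).1)
      (nullhomotopic_of_apply_ne_zero _ fun y => (hlast y).2)

-- Up to positive factors, the `pq`-th powers of the three factors are `θ ^ (p * q)`,
-- `conj θ ^ (p * q * p * α)` and `θ ^ (p * q * q * β)`, so by `hαβ` the phases of `θ` cancel.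
theorem pow_mem_slitPlane_of_balanced {w w' s t θ : ℂ} (hw : w ≠ 0) (hw' : w' ≠ 0) (hθ : θ ≠ 0)
    {α β : ℕ} (hs : s ^ q = (w * θ ^ p) ^ q) (ht : t ^ p = (w' * θ ^ q) ^ p)
    (hαβ : p * α = 1 + q * β) :
    (θ * conj (conj w * s) ^ α * (conj w' * t) ^ β) ^ (p * q) ∈ Complex.slitPlane := by
  have hpos : 0 < Complex.normSq w ^ (p * q * α) * Complex.normSq w' ^ (p * q * β) *
      Complex.normSq θ ^ (p * q * p * α) := by
    have := Complex.normSq_pos.2 hw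
    have := Complex.normSq_pos.2 hw'
    have := Complex.normSq_pos.2 hθ
    positivity
  have hsα : (conj (conj w * s) ^ α) ^ (p * q) =
      (Complex.normSq w : ℂ) ^ (p * q * α) * conj θ ^ (p * q * p * α) := by
    calc (conj (conj w * s) ^ α) ^ (p * q) = (w ^ q * conj (s ^ q)) ^ (p * α) := by
          simp only [map_mul, map_pow, Complex.conj_conj]; ring
      _ = (w * conj w) ^ (p * q * α) * conj θ ^ (p * q * p * α) := by
          rw [hs]; simp only [map_mul, map_pow]; ring
      _ = _ := by rw [Complex.mul_conj]
  have htβ : ((conj w' * t) ^ β) ^ (p * q) =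
      (Complex.normSq w' : ℂ) ^ (p * q * β) * θ ^ (p * q * (q * β)) := by
    calc ((conj w' * t) ^ β) ^ (p * q) = (conj w' ^ p * t ^ p) ^ (q * β) := by ring
      _ = (w' * conj w') ^ (p * q * β) * θ ^ (p * q * (q * β)) := by rw [ht]; ring
      _ = _ := by rw [Complex.mul_conj]
  have hθα : θ ^ (p * q) * θ ^ (p * q * (q * β)) = θ ^ (p * q * p * α) := by
    rw [← pow_add, mul_assoc (p * q), hαβ]
    ring_nf
  convert Complex.ofReal_mem_slitPlane.2 hpos using 1
  rw [mul_pow, mul_pow, hsα, htβ]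
  push_cast
  rw [← Complex.mul_conj θ, mul_pow θ, ← hθα]
  ring

theorem exists_mul_eq_one_add_mul (hp : p ≠ 0) (hq : q ≠ 0) (hpq : p.Coprime q) :
    ∃ α β, p * α = 1 + q * β := by
  obtain ⟨m, -, hm⟩ := Nat.exists_mul_mod_eq_of_coprime 1 hpq hq
  have hmod : 1 ≡ p * (m + q) [MOD q] := by simpa [Nat.ModEq, mul_add] using hm.symm
  have hle : 1 ≤ p * (m + q) := Nat.mul_pos (Nat.pos_of_ne_zero hp) (by lia)
  obtain ⟨β, hβ⟩ := (Nat.modEq_iff_dvd' hle).1 hmod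
  exact ⟨m + q, β, by lia⟩

theorem isPrimitiveRoot_pow_mul_pow {M : Type*} [CommMonoid M] {x y : M} (hpq : p.Coprime q)
    (hx : IsPrimitiveRoot x p) (hy : IsPrimitiveRoot y q) :
    IsPrimitiveRoot (x ^ q * y ^ p) (p * q) := by
  have hxq := (hx.pow_of_coprime q hpq.symm).eq_orderOf
  have hyp := (hy.pow_of_coprime p hpq).eq_orderOf
  have hcoprime : (orderOf (x ^ q)).Coprime (orderOf (y ^ p)) := hxq ▸ hyp ▸ hpq
  have horder := (Commute.all (x ^ q) (y ^ p)).orderOf_mul_eq_mul_orderOf_of_coprime hcoprime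
  rw [← hxq, ← hyp] at horder
  exact horder ▸ IsPrimitiveRoot.orderOf _

theorem exists_layer_or_last {M : Type*} [MulZeroClass M] [NoZeroDivisors M]
    {A : Fin (a + 2) → M} {B : Fin (b + 2) → M} (hA : ∃ i, A i ≠ 0) (hB : ∃ j, B j ≠ 0) :
    (∃ (k : Fin (a + b + 2)) (ij : {ij : Fin (a + 2) × Fin (b + 2) // (ij.1 + ij.2 : ℕ) = k}),
      A ij.1.1 * B ij.1.2 ≠ 0 ∧ ∀ ij' ≠ ij, A ij'.1.1 * B ij'.1.2 = 0) ∨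
    (A (Fin.last _) ≠ 0 ∧ B (Fin.last _) ≠ 0) ∧
      (∀ i ≠ Fin.last _, A i = 0) ∧ ∀ j ≠ Fin.last _, B j = 0 := by
  obtain ⟨i, hi⟩ := exists_minimal_of_wellFoundedLT _ hA
  obtain ⟨j, hj⟩ := exists_minimal_of_wellFoundedLT _ hB
  have hA0 {i'} (h : i' < i) : A i' = 0 := not_not.1 (hi.not_prop_of_lt h)
  have hB0 {j'} (h : j' < j) : B j' = 0 := not_not.1 (hj.not_prop_of_lt h)
  obtain hlt | hge := lt_or_ge (i + j : ℕ) (a + b + 2)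
  · refine .inl ⟨⟨i + j, hlt⟩, ⟨(i, j), rfl⟩, mul_ne_zero hi.prop hj.prop, ?_⟩
    rintro ⟨⟨i', j'⟩, hsum⟩ hne
    obtain h | h | h := lt_trichotomy i' i
    · simp [hA0 h]
    · exact absurd (Subtype.ext (Prod.ext h (Fin.ext (by simpa [h] using hsum)))) hne
    · have hj' : j' < j := by simp only [Fin.lt_def] at h ⊢; simp only at hsum; lia
      simp [hB0 hj']
  · obtain rfl : i = Fin.last _ := Fin.ext (by simp only [Fin.val_last]; lia)
    obtain rfl : j = Fin.last _ := Fin.ext (by simp only [Fin.val_last]; lia)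
    exact .inr ⟨⟨hi.prop, hj.prop⟩, fun _ h => hA0 (Fin.lt_last_iff_ne_last.2 h),
      fun _ h => hB0 (Fin.lt_last_iff_ne_last.2 h)⟩

theorem exists_biCoord_layer_or_terminalFunction_pow_mem_slitPlane [NeZero p] [NeZero q]
    (hr : IsNormalizing ω r) (hr' : IsNormalizing ω' r') {α β : ℕ} (hαβ : p * α = 1 + q * β)
    (y : ComplexSphere (Fin (a + 2)) × ComplexSphere (Fin (b + 2))) :
    (∃ (k : Fin (a + b + 2)) (ij : {ij : Fin (a + 2) × Fin (b + 2) // (ij.1 + ij.2 : ℕ) = k}),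
      biCoord r r' p q ij y ≠ 0 ∧ ∀ ij' ≠ ij, biCoord r r' p q ij' y = 0) ∨
    terminalFunction r r' p q α β y ^ (p * q) ∈ Complex.slitPlane := by
  let θ := coupling r r' p q y
  refine (exists_layer_or_last (hr.exists_twistedCoord_ne_zero (q := q) (θ ^ p) y.1)
    (hr'.exists_twistedCoord_ne_zero (q := p) (θ ^ q) y.2)).imp_right ?_
  rintro ⟨⟨hx, hz⟩, hx0, hz0⟩
  have hw : y.1.1 (Fin.last _) ^ r (Fin.last _) ≠ 0 := by
    simpa [twistedCoord, NeZero.ne q] using hx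
  have hw' : y.2.1 (Fin.last _) ^ r' (Fin.last _) ≠ 0 := by
    simpa [twistedCoord, NeZero.ne p] using hz
  exact pow_mem_slitPlane_of_balanced hw hw' (mul_ne_zero (pow_ne_zero _ hw) (pow_ne_zero _ hw'))
    (hr.apply_zero_pow_eq (hx0 0 Fin.last_pos.ne)) (hr'.apply_zero_pow_eq (hz0 0 Fin.last_pos.ne))
    hαβ

end ProductOfSpheres

theorem lsCat_prod_lensSpace_le_spin_general {a b p q : ℕ} (ha : 2 ≤ a) (hb : 2 ≤ b)
    (hp : p ≠ 0) (hq : q ≠ 0) (hpq : p.Coprime q)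
    {ℓ : Fin a → ℤ} (hℓ : ∀ j, IsCoprime (ℓ j) (p : ℤ))
    {ℓ' : Fin b → ℤ} (hℓ' : ∀ j, IsCoprime (ℓ' j) (q : ℤ)) :
    lsCat (LensSpace p a ℓ × LensSpace q b ℓ') ≤ 2 * (a + b - 2) := by
  obtain ⟨a, rfl⟩ := Nat.exists_eq_add_of_le' ha
  obtain ⟨b, rfl⟩ := Nat.exists_eq_add_of_le' hb
  have : NeZero p := ⟨hp⟩
  have : NeZero q := ⟨hq⟩
  obtain ⟨r, hr⟩ := exists_isNormalizing fun j => isPrimitiveRoot_lensRoot (hℓ j)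
  obtain ⟨r', hr'⟩ := exists_isNormalizing fun j => isPrimitiveRoot_lensRoot (hℓ' j)
  obtain ⟨α, β, hαβ⟩ := exists_mul_eq_one_add_mul hp hq hpq
  have hχ := isPrimitiveRoot_pow_mul_pow hpq (isPrimitiveRoot_lensRoot (hℓ 0))
    (isPrimitiveRoot_lensRoot (hℓ' 0))
  have hπ := (LensSpace.isCyclicQuotient_mk hℓ).prodMap (LensSpace.isCyclicQuotient_mk hℓ') hpq
  rw [show a + 2 + (b + 2) - 2 = a + b + 2 by lia]
  exact hπ.lsCat_le_two_mul hχ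
    (ι := fun k : Fin (a + b + 2) => {ij : Fin (a + 2) × Fin (b + 2) // (ij.1 + ij.2 : ℕ) = k})
    (f := fun _ ij => biCoord r r' p q ij)
    (fun _ ij => isCategoricalFunction_biCoord hr hr' hχ.pow_eq_one ij.1)
    (isCategoricalFunction_terminalFunction hr hr' α β)
    (exists_biCoord_layer_or_terminalFunction_pow_mem_slitPlane hr hr' hαβ)

/-- For odd `m, n > 2` and relatively prime `p, q ≥ 2` with both `p, q` odd, or `p` odd and
`q` even with `n = 2k-1` for even `k`: `cat (L^m_p × L^n_q) ≤ m + n - 2`. -/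
theorem lsCat_prod_lensSpace_le_spin (a b : ℕ) (ha : 2 ≤ a) (hb : 2 ≤ b)
    (m n : ℕ) (hm : m = 2 * a - 1) (hn : n = 2 * b - 1)
    (p q : ℕ) (hp2 : 2 ≤ p) (hq2 : 2 ≤ q) (hpq : Nat.Coprime p q)
    (hparity : (Odd p ∧ Odd q) ∨ (Odd p ∧ Even q ∧ Even b))
    (ℓ : Fin a → ℤ) (hℓ : ∀ j, IsCoprime (ℓ j) (p : ℤ))
    (ℓ' : Fin b → ℤ) (hℓ' : ∀ j, IsCoprime (ℓ' j) (q : ℤ)) :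
    lsCat (LensSpace p a ℓ × LensSpace q b ℓ') ≤ m + n - 2 := by
  have h := lsCat_prod_lensSpace_le_spin_general ha hb (by lia) (by lia) hpq hℓ hℓ'
  lia
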